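/- arXiv:1001.0169 — 3 statements merged into one kernel-verified Lean document; each statement's English description precedes it below -/
import Mathlib

section
/- Let Γ be a group and Γ₀ a subgroup of Γ. Suppose that for every g ∈ Γ with g ∉ Γ₀, the set g·Γ₀·g⁻¹ ∩ Γ₀ = {y ∈ Γ₀ : g⁻¹ · y · g ∈ Γ₀} is finite. Then for all g₁, g₂ ∈ Γ with g₁ ∉ Γ₀ and g₂ ∉ Γ₀, the set g₁·Γ₀·g₂ ∩ Γ₀ = {y ∈ Γ₀ : g₁⁻¹ · y · g₂⁻¹ ∈ Γ₀} is finite. (Key step in the proof of Theorem 4.2, implication 2 ⇒ 1.) -/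
/-- Key step in the proof of Theorem 4.2, implication 2 ⇒ 1: if `g Γ₀ g⁻¹ ∩ Γ₀` is finite for
every `g ∉ Γ₀`, then `g₁ Γ₀ g₂ ∩ Γ₀` is finite for all `g₁, g₂ ∉ Γ₀`. -/
theorem finite_double_coset_inter_of_finite_conjugate_inter
    {Γ : Type*} [Group Γ] (Γ₀ : Subgroup Γ)
    (h : ∀ g : Γ, g ∉ Γ₀ → {y : Γ | y ∈ Γ₀ ∧ g⁻¹ * y * g ∈ Γ₀}.Finite) :
    ∀ g₁ g₂ : Γ, g₁ ∉ Γ₀ → g₂ ∉ Γ₀ →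
      {y : Γ | y ∈ Γ₀ ∧ g₁⁻¹ * y * g₂⁻¹ ∈ Γ₀}.Finite := by
  intro g₁ g₂ h₁ _
  rcases Set.eq_empty_or_nonempty {y : Γ | y ∈ Γ₀ ∧ g₁⁻¹ * y * g₂⁻¹ ∈ Γ₀} with he | ⟨z, hz, hz2⟩
  · rw [he]
    exact Set.finite_empty
  · refine ((h g₁ h₁).image (fun x => x * z)).subset ?_
    rintro y ⟨hy, hy2⟩
    refine ⟨y * z⁻¹, ⟨Γ₀.mul_mem hy (Γ₀.inv_mem hz), ?_⟩, by simp⟩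
    have hm := Γ₀.mul_mem hy2 (Γ₀.inv_mem hz2)
    have e : g₁⁻¹ * (y * z⁻¹) * g₁ = g₁⁻¹ * y * g₂⁻¹ * (g₁⁻¹ * z * g₂⁻¹)⁻¹ := by group
    rw [e]
    exact hm
end

section
/- Let N and H be groups and φ : H → Aut(N) a group homomorphism, and form the semidirect product Γ = N ⋊_φ H with canonical embeddings i : N → Γ and j : H → Γ. Then the following are equivalent: (1) for every n ∈ N with n ≠ 1, the stabilizer {h ∈ H : φ(h)(n) = n} is a finite set; (2) for every x ∈ Γ with x ∉ j(H), the set x·j(H)·x⁻¹ ∩ j(H) = {y ∈ j(H) : x⁻¹ · y · x ∈ j(H)} is finite. (Group-theoretic content of Proposition 4.3.) -/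
theorem mem_range_inr_aux {N H : Type*} [Group N] [Group H] (φ : H →* MulAut N) (x : N ⋊[φ] H) :
    x ∈ (SemidirectProduct.inr : H →* N ⋊[φ] H).range ↔ x.left = 1 := by
  constructor
  · rintro ⟨h, rfl⟩
    rfl
  · intro h
    exact ⟨x.right, SemidirectProduct.ext h.symm rfl⟩

theorem conj_inter_aux {N H : Type*} [Group N] [Group H] (φ : H →* MulAut N) (x : N ⋊[φ] H) :
    {y : N ⋊[φ] H | y ∈ (SemidirectProduct.inr : H →* N ⋊[φ] H).range ∧
      x⁻¹ * y * x ∈ (SemidirectProduct.inr : H →* N ⋊[φ] H).range} =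
    (SemidirectProduct.inr : H →* N ⋊[φ] H) '' {h : H | φ h x.left = x.left} := by
  have key : ∀ k : H, x⁻¹ * SemidirectProduct.inr k * x ∈
      (SemidirectProduct.inr : H →* N ⋊[φ] H).range ↔ φ k x.left = x.left := by
    intro k
    rw [mem_range_inr_aux]
    have : (x⁻¹ * SemidirectProduct.inr k * x).left =
        φ x.right⁻¹ (x.left⁻¹ * φ k x.left) := by
      simp
    rw [this, map_eq_one_iff _ (φ x.right⁻¹).injective, inv_mul_eq_one, eq_comm]
  ext y
  constructor
  · rintro ⟨⟨k, rfl⟩, h⟩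
    exact ⟨k, (key k).1 h, rfl⟩
  · rintro ⟨k, h, rfl⟩
    exact ⟨⟨k, rfl⟩, (key k).2 h⟩

/-- Group-theoretic content of Proposition 4.3: in `Γ = N ⋊[φ] H`, every nontrivial `n ∈ N` has
finite stabilizer in `H` iff for every `x ∉ j(H)` the set `x j(H) x⁻¹ ∩ j(H)` is finite. -/
theorem semidirectProduct_finite_stabilizers_iff_finite_conjugate_inter
    {N H : Type*} [Group N] [Group H] (φ : H →* MulAut N) :
    (∀ n : N, n ≠ 1 → {h : H | φ h n = n}.Finite) ↔
      (∀ x : N ⋊[φ] H, x ∉ (SemidirectProduct.inr : H →* N ⋊[φ] H).range →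
        {y : N ⋊[φ] H | y ∈ (SemidirectProduct.inr : H →* N ⋊[φ] H).range ∧
          x⁻¹ * y * x ∈ (SemidirectProduct.inr : H →* N ⋊[φ] H).range}.Finite) := by
  constructor
  · intro h x hx
    rw [conj_inter_aux]
    exact (h x.left (fun e => hx ((mem_range_inr_aux φ x).2 e))).image _
  · intro h n hn
    have := h (SemidirectProduct.inl n) (fun e => hn ((mem_range_inr_aux φ _).1 e))
    rw [conj_inter_aux] at this
    exact this.of_finite_image SemidirectProduct.inr_injective.injOn
end

section
/- Let Γ be a group and Γ₀ a subgroup of Γ. Then the following are equivalent: (1) for every g ∈ Γ with g ∉ Γ₀, the set g·Γ₀·g⁻¹ ∩ Γ₀ = {y ∈ Γ₀ : g⁻¹ · y · g ∈ Γ₀} is finite; (2) for every finite subset C ⊆ Γ with C ∩ Γ₀ = ∅, there exists a finite subset E ⊆ Γ₀ such that for all γ ∈ Γ₀ with γ ∉ E and all g, h ∈ C, one has g·γ·h ∉ Γ₀. (Equivalence of condition 2 of Theorem 4.2 with the condition (ST) of Jolissaint–Stalder.) -/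
/-- Equivalence of condition 2 of Theorem 4.2 with the condition (ST) of Jolissaint–Stalder. -/
theorem finite_conjugate_inter_iff_condition_ST
    {Γ : Type*} [Group Γ] (Γ₀ : Subgroup Γ) :
    (∀ g : Γ, g ∉ Γ₀ → {y : Γ | y ∈ Γ₀ ∧ g⁻¹ * y * g ∈ Γ₀}.Finite) ↔
      (∀ C : Set Γ, C.Finite → C ∩ (Γ₀ : Set Γ) = ∅ →
        ∃ E : Set Γ, E.Finite ∧ E ⊆ (Γ₀ : Set Γ) ∧
          ∀ γ ∈ Γ₀, γ ∉ E → ∀ g ∈ C, ∀ h ∈ C, g * γ * h ∉ Γ₀) := by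
  constructor
  · intro H C hC hdisj
    refine ⟨⋃ g ∈ C, ⋃ h ∈ C, {γ : Γ | γ ∈ Γ₀ ∧ g * γ * h ∈ Γ₀}, ?_, ?_, ?_⟩
    · refine hC.biUnion fun g hg => hC.biUnion fun h _ => ?_
      have hg' : g⁻¹ ∉ Γ₀ := by
        intro h1
        have h2 : g ∈ C ∩ (Γ₀ : Set Γ) := ⟨hg, by simpa using h1⟩
        rw [hdisj] at h2
        exact h2
      rcases Set.eq_empty_or_nonempty {γ : Γ | γ ∈ Γ₀ ∧ g * γ * h ∈ Γ₀} with he | ⟨γ₁, h1, h2⟩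
      · rw [he]; exact Set.finite_empty
      · refine ((H _ hg').image (fun y => y * γ₁)).subset ?_
        rintro γ ⟨h3, h4⟩
        refine ⟨γ * γ₁⁻¹, ⟨Γ₀.mul_mem h3 (Γ₀.inv_mem h1), ?_⟩, by simp⟩
        have h5 := Γ₀.mul_mem h4 (Γ₀.inv_mem h2)
        convert h5 using 1
        group
    · intro x hx
      simp only [Set.mem_iUnion] at hx
      obtain ⟨_, _, _, _, hx, _⟩ := hx
      exact hx
    · intro γ hγ hE g hg h hh hmem
      apply hE
      simp only [Set.mem_iUnion]
      exact ⟨g, hg, h, hh, hγ, hmem⟩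
  · intro H g hg
    obtain ⟨E, hE, _, h⟩ := H {g, g⁻¹} (by simp) (by
      ext x
      simp only [Set.mem_inter_iff, Set.mem_insert_iff, Set.mem_singleton_iff, SetLike.mem_coe,
        Set.mem_empty_iff_false, iff_false]
      rintro ⟨rfl | rfl, hx⟩
      · exact hg hx
      · exact hg (by simpa using hx))
    refine hE.subset ?_
    rintro y ⟨h1, h2⟩
    by_contra hy
    exact h y h1 hy g⁻¹ (by simp) g (by simp) h2
end
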